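/- arXiv:1902.03291 — 2 statements merged into one kernel-verified Lean document; each statement's English description precedes it below -/
import Mathlib

section
/- Let n ≥ 3 be an integer and let A = (a_{st}) be a symmetric n×n real matrix with zero diagonal (a_{ss} = 0 for all s). Then U-centering is idempotent on A: the U-centered version of Ã equals Ã, i.e. Ã̃ = Ã. -/
open Finset Matrix

/-- The `𝒰`-centered version `Ã` of an `n × n` real matrix `A`:
`ã_{st} = a_{st} − (1/(n−2))·Σ_v a_{sv} − (1/(n−2))·Σ_u a_{ut}
          + (1/((n−1)(n−2)))·Σ_{u,v} a_{uv}` for `s ≠ t`, and `ã_{ss} = 0`. -/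
noncomputable def uCenter {n : ℕ} (A : Matrix (Fin n) (Fin n) ℝ) :
    Matrix (Fin n) (Fin n) ℝ := fun s t =>
  if s = t then 0 else
    A s t - (∑ v, A s v) / ((n : ℝ) - 2) - (∑ u, A u t) / ((n : ℝ) - 2)
      + (∑ u, ∑ v, A u v) / (((n : ℝ) - 1) * ((n : ℝ) - 2))

/-!
Let `r_s` and `c_s` be the `s`-th row and column sums of `A`, with `n ≥ 3`. The `s`-th row of `Ã`
sums to `(c_s - r_s) / (n - 2) - a_{ss}`; as centering commutes with transposition, the `s`-th
column sums to `(r_s - c_s) / (n - 2) - a_{ss}`. So if `A` has zero diagonal and `r_s = c_s` for all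
`s`, then all row and column sums of `Ã` vanish, and centering `Ã` subtracts nothing from it.
-/

section

variable {n : ℕ} (A : Matrix (Fin n) (Fin n) ℝ)

theorem uCenter_apply_self (s : Fin n) : uCenter A s s = 0 :=
  if_pos rfl

theorem uCenter_apply_of_ne {s t : Fin n} (h : s ≠ t) :
    uCenter A s t =
      A s t - (∑ v, A s v) / ((n : ℝ) - 2) - (∑ u, A u t) / ((n : ℝ) - 2)
        + (∑ u, ∑ v, A u v) / (((n : ℝ) - 1) * ((n : ℝ) - 2)) :=
  if_neg h

theorem uCenter_transpose : uCenter Aᵀ = (uCenter A)ᵀ := by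
  ext s t
  obtain rfl | h := eq_or_ne s t
  · simp only [transpose_apply, uCenter_apply_self]
  · have total_transpose : ∑ u, ∑ v, A v u = ∑ u, ∑ v, A u v := sum_comm
    simp only [transpose_apply, uCenter_apply_of_ne _ h, uCenter_apply_of_ne _ h.symm,
      total_transpose]
    ring

theorem sum_uCenter_row (hn : 3 ≤ n) (s : Fin n) :
    ∑ t, uCenter A s t = (∑ u, A u s - ∑ v, A s v) / ((n : ℝ) - 2) - A s s := by
  have hn' : (3 : ℝ) ≤ n := mod_cast hn
  have h₁ : (n : ℝ) - 1 ≠ 0 := by linarith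
  have h₂ : (n : ℝ) - 2 ≠ 0 := by linarith
  have total_comm : ∑ t, ∑ u, A u t = ∑ u, ∑ v, A u v := sum_comm
  calc
    ∑ t, uCenter A s t
      = ∑ t ∈ univ.erase s, uCenter A s t := (sum_erase _ (uCenter_apply_self A s)).symm
    _ = ∑ t ∈ univ.erase s,
          (A s t - (∑ v, A s v) / ((n : ℝ) - 2) - (∑ u, A u t) / ((n : ℝ) - 2)
            + (∑ u, ∑ v, A u v) / (((n : ℝ) - 1) * ((n : ℝ) - 2))) :=
      sum_congr rfl fun _ ht ↦ uCenter_apply_of_ne A (ne_of_mem_erase ht).symm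
    _ = (∑ v, A s v - A s s) - ((n : ℝ) - 1) * ((∑ v, A s v) / ((n : ℝ) - 2))
          - (∑ u, ∑ v, A u v - ∑ u, A u s) / ((n : ℝ) - 2)
          + ((n : ℝ) - 1) * ((∑ u, ∑ v, A u v) / (((n : ℝ) - 1) * ((n : ℝ) - 2))) := by
      simp only [sum_erase_eq_sub (mem_univ s), sum_add_distrib, sum_sub_distrib, ← sum_div,
        sum_const, card_univ, Fintype.card_fin, nsmul_eq_mul, total_comm]
      ring
    _ = (∑ u, A u s - ∑ v, A s v) / ((n : ℝ) - 2) - A s s := by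
      field_simp
      ring

theorem sum_uCenter_col (hn : 3 ≤ n) (t : Fin n) :
    ∑ s, uCenter A s t = (∑ v, A t v - ∑ u, A u t) / ((n : ℝ) - 2) - A t t := by
  simpa only [uCenter_transpose, transpose_apply] using sum_uCenter_row Aᵀ hn t

variable {A}

theorem uCenter_eq_self (hdiag : ∀ s, A s s = 0) (hrow : ∀ s, ∑ v, A s v = 0)
    (hcol : ∀ t, ∑ u, A u t = 0) : uCenter A = A := by
  ext s t
  obtain rfl | h := eq_or_ne s t
  · rw [uCenter_apply_self, hdiag]
  · simp only [uCenter_apply_of_ne A h, hrow, hcol, sum_const_zero, zero_div, sub_zero, add_zero]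

theorem uCenter_idempotent_general (hn : 3 ≤ n) (hsum : ∀ s, ∑ v, A s v = ∑ u, A u s)
    (hdiag : ∀ s, A s s = 0) : uCenter (uCenter A) = uCenter A := by
  have hrow (s : Fin n) : ∑ t, uCenter A s t = 0 := by
    rw [sum_uCenter_row A hn, hsum, hdiag, sub_self, zero_div, sub_zero]
  have hcol (t : Fin n) : ∑ s, uCenter A s t = 0 := by
    rw [sum_uCenter_col A hn, hsum, hdiag, sub_self, zero_div, sub_zero]
  exact uCenter_eq_self (uCenter_apply_self A) hrow hcol

end

/-- Let `n ≥ 3` and let `A` be a symmetric `n × n` real matrix with zero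
diagonal. Then `𝒰`-centering is idempotent on `A`: `Ã̃ = Ã`. -/
theorem uCenter_idempotent (n : ℕ) (hn : 3 ≤ n)
    (A : Matrix (Fin n) (Fin n) ℝ) (hsymm : Aᵀ = A) (hdiag : ∀ s, A s s = 0) :
    uCenter (uCenter A) = uCenter A :=
  uCenter_idempotent_general hn (fun s ↦ sum_congr rfl fun v _ ↦ IsSymm.apply hsymm v s) hdiag
end

section
/- Let S and T be measurable spaces and let (X,Y) and (X′,Y′) be independent identically distributed random pairs taking values in S×T. Let k : S×S → ℝ be measurable with E[|k(X,X′)|] < ∞, and let h_k be the corresponding doubly centered kernel. Then the conditional expectation of h_k(X,X′) given the σ-algebra generated by (X,Y) vanishes almost surely: E[h_k(X,X′) | σ(X,Y)] = 0 a.s. -/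
open MeasureTheory ProbabilityTheory

/-!
By independence, conditioning on `U` freezes `U` and integrates `V` out against its own law. For a
doubly centered kernel this integral is `g(u) - g(u) - c + c = 0`, where `g(u) = E[k(u,V)]` and
`c = E[k(U,V)]`; that the third term integrates to `c` is Fubini. The theorem is the case
`U = (X,Y)`, `V = (X′,Y′)`, for the kernel that reads only the first coordinates.
-/

section DoublyCentered

variable {α β E : Type*} [MeasurableSpace α] [MeasurableSpace β]
  [NormedAddCommGroup E] [NormedSpace ℝ E]

/-- The doubly centered kernel (Hoeffding projection onto the degenerate part) of `k` with respect
to the laws `μ` and `ν` of its two independent arguments; the `h_k` of an i.i.d. pair is the case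
`μ = ν`. -/
noncomputable def doublyCentered (μ : Measure α) (ν : Measure β) (k : α → β → E) (a : α) (b : β) :
    E :=
  k a b - (∫ y, k a y ∂ν) - (∫ x, k x b ∂μ) + ∫ p, k p.1 p.2 ∂μ.prod ν

variable {μ : Measure α} {ν : Measure β} {k : α → β → E}

lemma integrable_doublyCentered [IsFiniteMeasure μ] [IsFiniteMeasure ν]
    (hk : Integrable (Function.uncurry k) (μ.prod ν)) :
    Integrable (Function.uncurry (doublyCentered μ ν k)) (μ.prod ν) :=
  ((hk.sub (hk.integral_prod_left.comp_fst ν)).sub (hk.integral_prod_right.comp_snd μ)).add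
    (integrable_const _)

lemma ae_integral_doublyCentered_eq_zero [CompleteSpace E] [SFinite μ]
    [IsProbabilityMeasure ν] (hk : Integrable (Function.uncurry k) (μ.prod ν)) :
    ∀ᵐ a ∂μ, ∫ b, doublyCentered μ ν k a b ∂ν = 0 := by
  filter_upwards [hk.prod_right_ae] with a hslice
  replace hslice : Integrable (fun b => k a b) ν := hslice
  have hright : Integrable (fun b => ∫ x, k x b ∂μ) ν := hk.integral_prod_right
  have hfubini : ∫ b, ∫ x, k x b ∂μ ∂ν = ∫ p, k p.1 p.2 ∂μ.prod ν :=
    (integral_prod_symm _ hk).symm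
  have hleft : Integrable (fun b => k a b - ∫ y, k a y ∂ν) ν := hslice.sub (integrable_const _)
  have hboth : Integrable (fun b => k a b - (∫ y, k a y ∂ν) - ∫ x, k x b ∂μ) ν := hleft.sub hright
  calc ∫ b, doublyCentered μ ν k a b ∂ν
      = (∫ b, k a b ∂ν) - (∫ y, k a y ∂ν) - (∫ b, ∫ x, k x b ∂μ ∂ν)
          + ∫ p, k p.1 p.2 ∂μ.prod ν := by
        simp only [doublyCentered]
        rw [integral_add hboth (integrable_const _), integral_sub hleft hright,
          integral_sub hslice (integrable_const _), integral_const, integral_const, probReal_univ,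
          one_smul, one_smul]
    _ = 0 := by rw [hfubini, sub_self, zero_sub, neg_add_cancel]

end DoublyCentered

section Independence

variable {Ω α β E : Type*} [MeasurableSpace Ω] [MeasurableSpace α] [MeasurableSpace β]
  [NormedAddCommGroup E] [NormedSpace ℝ E]
  {μ : Measure Ω} [IsFiniteMeasure μ] {U : Ω → α} {V : Ω → β}

lemma condExp_comap_ae_eq_integral_map_of_indepFun [CompleteSpace E] {f : α → β → E}
    (hU : Measurable U) (hV : AEMeasurable V μ) (hUV : IndepFun U V μ)
    (hf : Integrable (Function.uncurry f) ((μ.map U).prod (μ.map V))) :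
    μ[fun ω => f (U ω) (V ω) | MeasurableSpace.comap U inferInstance] =ᵐ[μ]
      fun ω => ∫ y, f (U ω) y ∂μ.map V := by
  have hlaw : μ.map (fun ω => (U ω, V ω)) = (μ.map U).prod (μ.map V) :=
    hUV.map_prod_eq_prod_map_map hU.aemeasurable hV
  have hpair : AEMeasurable (fun ω => (U ω, V ω)) μ := hU.aemeasurable.prodMk hV
  have hinner : Integrable (fun x => ∫ y, f x y ∂μ.map V) (μ.map U) := hf.integral_prod_left
  have hcomp : Integrable (fun ω => f (U ω) (V ω)) μ :=
    Integrable.comp_aemeasurable (g := Function.uncurry f) (hlaw ▸ hf) hpair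
  refine (ae_eq_condExp_of_forall_setIntegral_eq hU.comap_le hcomp
    (fun _ _ _ => (hinner.comp_measurable hU).integrableOn) ?_
    (hinner.aestronglyMeasurable.comp_ae_measurable' hU.aemeasurable)).symm
  rintro _ ⟨A, hA, rfl⟩ -
  calc ∫ ω in U ⁻¹' A, ∫ y, f (U ω) y ∂μ.map V ∂μ
      = ∫ x in A, ∫ y, f x y ∂μ.map V ∂μ.map U :=
        (setIntegral_map hA hinner.aestronglyMeasurable hU.aemeasurable).symm
    _ = ∫ p in A ×ˢ Set.univ, Function.uncurry f p ∂(μ.map U).prod (μ.map V) := by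
        rw [setIntegral_prod _ hf.integrableOn, Measure.restrict_univ]
        rfl
    _ = ∫ ω in U ⁻¹' A, f (U ω) (V ω) ∂μ := by
        rw [← hlaw, setIntegral_map (hA.prod .univ) (hlaw ▸ hf.aestronglyMeasurable) hpair,
          Set.mk_preimage_prod, Set.preimage_univ, Set.inter_univ]
        rfl

lemma doublyCentered_map_of_indepFun {k : α → β → E} (hU : AEMeasurable U μ)
    (hV : AEMeasurable V μ) (hUV : IndepFun U V μ) (hk : StronglyMeasurable (Function.uncurry k))
    (a : α) (b : β) :
    doublyCentered (μ.map U) (μ.map V) k a b =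
      k a b - (∫ ω, k a (V ω) ∂μ) - (∫ ω, k (U ω) b ∂μ) + ∫ ω, k (U ω) (V ω) ∂μ := by
  have hleft : ∫ y, k a y ∂μ.map V = ∫ ω, k a (V ω) ∂μ :=
    integral_map hV (hk.comp_measurable measurable_prodMk_left).aestronglyMeasurable
  have hright : ∫ x, k x b ∂μ.map U = ∫ ω, k (U ω) b ∂μ :=
    integral_map hU (hk.comp_measurable measurable_prodMk_right).aestronglyMeasurable
  have hjoint : ∫ p, k p.1 p.2 ∂(μ.map U).prod (μ.map V) = ∫ ω, k (U ω) (V ω) ∂μ := by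
    rw [← hUV.map_prod_eq_prod_map_map hU hV]
    exact integral_map (hU.prodMk hV) hk.aestronglyMeasurable
  rw [doublyCentered, hleft, hright, hjoint]

end Independence

theorem condexp_doublyCentered_eq_zero_general
    {Ω α β E : Type*} [MeasurableSpace Ω] [MeasurableSpace α] [MeasurableSpace β]
    [NormedAddCommGroup E] [NormedSpace ℝ E] [CompleteSpace E]
    {μ : Measure Ω} [IsProbabilityMeasure μ] {U : Ω → α} {V : Ω → β}
    (hU : Measurable U) (hV : AEMeasurable V μ) (hUV : IndepFun U V μ)
    {k : α → β → E} (hkmeas : StronglyMeasurable (Function.uncurry k))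
    (hkint : Integrable (fun ω => k (U ω) (V ω)) μ)
    {hk : α → β → E}
    (hhk : ∀ a b, hk a b = k a b - (∫ ω, k a (V ω) ∂μ) - (∫ ω, k (U ω) b ∂μ)
      + ∫ ω, k (U ω) (V ω) ∂μ) :
    μ[fun ω => hk (U ω) (V ω) | MeasurableSpace.comap U inferInstance] =ᵐ[μ] 0 := by
  obtain rfl : hk = doublyCentered (μ.map U) (μ.map V) k := by
    ext a b
    rw [hhk, doublyCentered_map_of_indepFun hU.aemeasurable hV hUV hkmeas]
  have : IsProbabilityMeasure (μ.map V) := Measure.isProbabilityMeasure_map hV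
  have hkprod : Integrable (Function.uncurry k) ((μ.map U).prod (μ.map V)) := by
    rw [← hUV.map_prod_eq_prod_map_map hU.aemeasurable hV]
    exact (integrable_map_measure hkmeas.aestronglyMeasurable (hU.aemeasurable.prodMk hV)).2 hkint
  exact (condExp_comap_ae_eq_integral_map_of_indepFun hU hV hUV
    (integrable_doublyCentered hkprod)).trans
    (ae_of_ae_map hU.aemeasurable (ae_integral_doublyCentered_eq_zero hkprod))

/-- Let `(X,Y)` and `(X′,Y′)` be i.i.d. random pairs in `S × T`, `k` a
measurable kernel with `E[|k(X,X′)|] < ∞` and `hk` the corresponding doubly centered kernel.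
Then `E[hk(X,X′) | σ(X,Y)] = 0` almost surely. -/
theorem condexp_doublyCentered_eq_zero
    {Ω S T : Type*} [MeasurableSpace Ω] [MeasurableSpace S] [MeasurableSpace T]
    (μ : Measure Ω) [IsProbabilityMeasure μ]
    (X X' : Ω → S) (Y Y' : Ω → T)
    (hmeas : Measurable (fun ω => (X ω, Y ω)))
    (hmeas' : Measurable (fun ω => (X' ω, Y' ω)))
    (hindep : IndepFun (fun ω => (X ω, Y ω)) (fun ω => (X' ω, Y' ω)) μ)
    (hident : Measure.map (fun ω => (X ω, Y ω)) μ =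
      Measure.map (fun ω => (X' ω, Y' ω)) μ)
    (k : S → S → ℝ)
    (hkmeas : Measurable fun p : S × S => k p.1 p.2)
    (hkint : Integrable (fun ω => k (X ω) (X' ω)) μ)
    (hk : S → S → ℝ)
    (hhk : ∀ a b, hk a b = k a b - (∫ ω, k a (X' ω) ∂μ) - (∫ ω, k (X ω) b ∂μ)
      + ∫ ω, k (X ω) (X' ω) ∂μ) :
    μ[(fun ω => hk (X ω) (X' ω)) |
        MeasurableSpace.comap (fun ω => (X ω, Y ω)) inferInstance] =ᵐ[μ] 0 := by
  have hkmeas_fst : Measurable fun q : (S × T) × (S × T) => k q.1.1 q.2.1 :=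
    hkmeas.comp (measurable_fst.prodMap measurable_fst)
  exact condexp_doublyCentered_eq_zero_general (k := fun z z' => k z.1 z'.1)
    hmeas hmeas'.aemeasurable hindep hkmeas_fst.stronglyMeasurable hkint
    (hk := fun z z' => hk z.1 z'.1) (fun z z' => hhk z.1 z'.1)
end
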